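/- Let F = {f₁,…,f_k} be an IFS of similarities on ℝ^d satisfying the open set condition, all with common similarity factor c ∈ (0,1), with attractor K of positive diameter and natural fractal structure Γ_n = {f_ω(K) : ω ∈ I^n}. Then the fractal dimension II of K, dim²(K) = lim_{n→∞} log N_n(K) / (−log δ(K, Γ_n)), exists and equals the box dimension of K, and both equal −log k / log c. Here N_n(K) is the number of elements of Γ_n (counted with multiplicity) meeting K, and δ(K, Γ_n) is the supremum of diameters of such elements. -/

import Mathlib

open Metric Set Filter Topology MeasureTheory ENNReal NNReal

noncomputable section

/-- A map is a similarity with factor `c` if it scales all distances exactly by `c`. -/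
def IsSimilarity {X : Type*} [MetricSpace X] (f : X → X) (c : ℝ) : Prop :=
  ∀ x y, dist (f x) (f y) = c * dist x y

/-- Composition `f_{ω₁} ∘ ⋯ ∘ f_{ω_n}` of the maps of an IFS along a word `ω`. -/
def wordComp {X : Type*} {k : ℕ} (f : Fin k → X → X) {n : ℕ} (ω : Fin n → Fin k) : X → X :=
  (List.ofFn fun i => f (ω i)).foldr (· ∘ ·) id

/-- Number of elements of level `Γ_n` of the natural fractal structure (counted with
multiplicity over words) that meet `K`. -/
def levelCount {X : Type*} [MetricSpace X] {k : ℕ} (f : Fin k → X → X) (K : Set X)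
    (n : ℕ) : ℕ :=
  Set.ncard {ω : Fin n → Fin k | ((wordComp f ω '' K) ∩ K).Nonempty}

/-- `δ(K, Γ_n)`: supremum of diameters of the elements of level `Γ_n` meeting `K`. -/
def deltaLevel {X : Type*} [MetricSpace X] {k : ℕ} (f : Fin k → X → X) (K : Set X)
    (n : ℕ) : ℝ :=
  sSup {d : ℝ | ∃ ω : Fin n → Fin k, ((wordComp f ω '' K) ∩ K).Nonempty ∧
    d = Metric.diam (wordComp f ω '' K)}

/-- `N_δ(K)`: the largest number of disjoint closed balls of radius `δ` with centres in `K`. -/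
def packingNum {X : Type*} [MetricSpace X] (K : Set X) (δ : ℝ) : ℕ :=
  sSup {m : ℕ | ∃ t : Finset X, t.card = m ∧ ↑t ⊆ K ∧
    (t : Set X).Pairwise fun x y => Disjoint (Metric.closedBall x δ) (Metric.closedBall y δ)}

/-- The pre-measure `H^s_{n,3}(K)`: infimum over whole levels `m ≥ n` of the sum of the
`s`-th powers of the diameters of all elements of that level (with multiplicity). -/
def H3pre {X : Type*} [MetricSpace X] {k : ℕ} (f : Fin k → X → X) (K : Set X)
    (s : ℝ) (n : ℕ) : ℝ≥0∞ :=
  ⨅ m : {m : ℕ // n ≤ m}, ∑ ω : Fin m.1 → Fin k,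
    ENNReal.ofReal (Metric.diam (wordComp f ω '' K)) ^ s

/-- `H^s_3(K)`: the (monotone) limit of `H^s_{n,3}(K)` as `n → ∞`. -/
def H3 {X : Type*} [MetricSpace X] {k : ℕ} (f : Fin k → X → X) (K : Set X) (s : ℝ) : ℝ≥0∞ :=
  ⨆ n : ℕ, H3pre f K s n

/-- `H^s_4(K)`: limit over `n` of the infimum over finite covers of `K` by elements of
levels `≥ n` of the natural fractal structure. -/
def H4 {X : Type*} [MetricSpace X] {k : ℕ} (f : Fin k → X → X) (K : Set X) (s : ℝ) : ℝ≥0∞ :=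
  ⨆ n : ℕ, ⨅ (𝒜 : Set (Set X)) (_ : 𝒜.Finite ∧
      (∀ A ∈ 𝒜, ∃ m, n ≤ m ∧ ∃ ω : Fin m → Fin k, A = wordComp f ω '' K) ∧ K ⊆ ⋃₀ 𝒜),
    ∑' A : 𝒜, ENNReal.ofReal (Metric.diam (A : Set X)) ^ s

/-- `H^s_5(K)`: limit over `n` of the infimum over countable covers of `K` by elements of
levels `≥ n` of the natural fractal structure. -/
def H5 {X : Type*} [MetricSpace X] {k : ℕ} (f : Fin k → X → X) (K : Set X) (s : ℝ) : ℝ≥0∞ :=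
  ⨆ n : ℕ, ⨅ (𝒜 : Set (Set X)) (_ : 𝒜.Countable ∧
      (∀ A ∈ 𝒜, ∃ m, n ≤ m ∧ ∃ ω : Fin m → Fin k, A = wordComp f ω '' K) ∧ K ⊆ ⋃₀ 𝒜),
    ∑' A : 𝒜, ENNReal.ofReal (Metric.diam (A : Set X)) ^ s

/-- `H^s_6(K)`: limit as `δ → 0` of the infimum over countable covers of `K` by
fractal-structure elements of diameter at most `δ`. -/
def H6 {X : Type*} [MetricSpace X] {k : ℕ} (f : Fin k → X → X) (K : Set X) (s : ℝ) : ℝ≥0∞ :=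
  ⨆ (δ : ℝ) (_ : 0 < δ), ⨅ (𝒜 : Set (Set X)) (_ : 𝒜.Countable ∧
      (∀ A ∈ 𝒜, (∃ m, ∃ ω : Fin m → Fin k, A = wordComp f ω '' K) ∧ Metric.diam A ≤ δ) ∧
      K ⊆ ⋃₀ 𝒜),
    ∑' A : 𝒜, ENNReal.ofReal (Metric.diam (A : Set X)) ^ s

/-- The open set condition for a family of self-maps of `ℝ^d`. -/
def OSC {d k : ℕ} (f : Fin k → EuclideanSpace ℝ (Fin d) → EuclideanSpace ℝ (Fin d)) : Prop :=
  ∃ V : Set (EuclideanSpace ℝ (Fin d)), V.Nonempty ∧ IsOpen V ∧ Bornology.IsBounded V ∧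
    (∀ i, f i '' V ⊆ V) ∧ Pairwise fun i j => Disjoint (f i '' V) (f j '' V)

/-!
Each of the `k ^ n` pieces of level `n` meets `K` and has diameter `c ^ n * diam K`, so the fractal
dimension II is a quotient of explicit geometric progressions. For the box dimension, the packing
number at scale `δ ≈ c ^ n` is compared with `k ^ n`. A piece of diameter at most `δ` holds the
centre of at most one ball of a packing, which bounds the packing number from above. From below,
the balls of a maximal packing, enlarged, contain a point of every piece; by the open set condition
the images of a point of the open set under the words of length `n` are `c ^ n * r`-separated, and
pulling them back along a word of length `n` turns those close to a given point of `K` into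
`r`-separated points of a fixed bounded set, whose number is bounded independently of `n`.
Hence the packing number is of the exact order `δ ^ (log k / log c)`.
-/

open Asymptotics Bornology Function Real

section Similarity

variable {X : Type*} [MetricSpace X] {f g : X → X} {b c : ℝ}

theorem IsSimilarity.id : IsSimilarity (id : X → X) 1 := fun x y => (one_mul (dist x y)).symm

theorem IsSimilarity.comp (hf : IsSimilarity f b) (hg : IsSimilarity g c) :
    IsSimilarity (f ∘ g) (b * c) := fun x y => by
  rw [comp_apply, comp_apply, hf, hg, mul_assoc]

theorem IsSimilarity.injective (hf : IsSimilarity f c) (hc : c ≠ 0) : Injective f := fun x y h => by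
  rw [← dist_eq_zero, hf, mul_eq_zero] at h
  exact dist_eq_zero.1 (h.resolve_left hc)

theorem IsSimilarity.diam_image (hf : IsSimilarity f c) (hc : 0 ≤ c) (s : Set X) :
    diam (f '' s) = c * diam s := by
  have hedist : ∀ x y, edist (f x) (f y) = ENNReal.ofReal c * edist x y := fun x y => by
    rw [edist_dist, edist_dist, hf, ENNReal.ofReal_mul hc]
  have hediam : ediam (f '' s) = ENNReal.ofReal c * ediam s := by
    simp only [ediam, iSup_image, hedist, ENNReal.mul_iSup]
  rw [diam, hediam, ENNReal.toReal_mul, ENNReal.toReal_ofReal hc, diam]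

theorem IsSimilarity.ball_subset_image_ball (hf : IsSimilarity f c) (hc : 0 < c)
    (hsurj : Surjective f) (x : X) (r : ℝ) : ball (f x) (c * r) ⊆ f '' ball x r := by
  intro y hy
  obtain ⟨z, rfl⟩ := hsurj y
  rw [mem_ball, hf, mul_lt_mul_iff_right₀ hc] at hy
  exact mem_image_of_mem f hy

theorem IsSimilarity.surjective {E : Type*} [NormedAddCommGroup E] [NormedSpace ℝ E]
    [StrictConvexSpace ℝ E] [FiniteDimensional ℝ E] {f : E → E} {c : ℝ} (hf : IsSimilarity f c)
    (hc : 0 < c) : Surjective f := by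
  have hiso : Isometry fun x => c⁻¹ • f x := Isometry.of_dist_eq fun x y => by
    rw [dist_smul₀, hf, Real.norm_of_nonneg (inv_nonneg.2 hc.le), inv_mul_cancel_left₀ hc.ne']
  have : Inhabited E := ⟨0⟩
  intro y
  obtain ⟨x, hx⟩ :=
    (hiso.affineIsometryOfStrictConvexSpace.toAffineIsometryEquiv rfl).surjective (c⁻¹ • y)
  exact ⟨x, smul_right_injective E (inv_ne_zero hc.ne') hx⟩

end Similarity

section Words

variable {X : Type*} {k : ℕ} {f : Fin k → X → X}

theorem wordComp_zero (f : Fin k → X → X) (ω : Fin 0 → Fin k) : wordComp f ω = id := by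
  simp only [wordComp, List.ofFn_zero, List.foldr_nil]

theorem wordComp_succ (f : Fin k → X → X) {n : ℕ} (ω : Fin (n + 1) → Fin k) :
    wordComp f ω = f (ω 0) ∘ wordComp f (Fin.tail ω) := by
  simp only [wordComp, List.ofFn_succ, List.foldr_cons, Fin.tail]

theorem isSimilarity_wordComp [MetricSpace X] {c : ℝ} (hf : ∀ i, IsSimilarity (f i) c) {n : ℕ}
    (ω : Fin n → Fin k) : IsSimilarity (wordComp f ω) (c ^ n) := by
  induction n with
  | zero => simpa only [wordComp_zero, pow_zero] using IsSimilarity.id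
  | succ n ih => simpa only [wordComp_succ, pow_succ'] using (hf _).comp (ih _)

theorem surjective_wordComp (hf : ∀ i, Surjective (f i)) {n : ℕ} (ω : Fin n → Fin k) :
    Surjective (wordComp f ω) := by
  induction n with
  | zero => simpa only [wordComp_zero] using surjective_id
  | succ n ih => simpa only [wordComp_succ] using (hf _).comp (ih _)

theorem mapsTo_wordComp {s : Set X} (hs : ∀ i, MapsTo (f i) s s) {n : ℕ} (ω : Fin n → Fin k) :
    MapsTo (wordComp f ω) s s := by
  induction n with
  | zero => simpa only [wordComp_zero] using mapsTo_id s
  | succ n ih => simpa only [wordComp_succ] using (hs _).comp (ih _)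

theorem pairwise_disjoint_image_wordComp {s : Set X} (hinj : ∀ i, Injective (f i))
    (hs : ∀ i, MapsTo (f i) s s) (hdisj : Pairwise fun i j => Disjoint (f i '' s) (f j '' s))
    (n : ℕ) : Pairwise fun ω ω' : Fin n → Fin k =>
      Disjoint (wordComp f ω '' s) (wordComp f ω' '' s) := by
  induction n with
  | zero => exact Subsingleton.pairwise
  | succ n ih =>
    intro ω ω' hne
    simp only [wordComp_succ, image_comp]
    by_cases hhead : ω 0 = ω' 0
    · have htail : Fin.tail ω ≠ Fin.tail ω' := fun htail =>
        hne (by rw [← Fin.cons_self_tail ω, ← Fin.cons_self_tail ω', hhead, htail])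
      rw [hhead, disjoint_image_iff (hinj _)]
      exact ih htail
    · exact (hdisj hhead).mono (image_mono (mapsTo_wordComp hs _).image_subset)
        (image_mono (mapsTo_wordComp hs _).image_subset)

variable {K : Set X}

theorem pos_of_eq_iUnion_image (hK : K = ⋃ i, f i '' K) (hne : K.Nonempty) : 0 < k := by
  rw [hK] at hne
  obtain ⟨i, -⟩ := nonempty_iUnion.1 hne
  exact i.pos

theorem mapsTo_of_eq_iUnion_image (hK : K = ⋃ i, f i '' K) (i : Fin k) : MapsTo (f i) K K :=
  mapsTo_iff_image_subset.2 ((subset_iUnion (fun i => f i '' K) i).trans hK.ge)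

theorem exists_mem_image_wordComp (hK : K = ⋃ i, f i '' K) (n : ℕ) {x : X} (hx : x ∈ K) :
    ∃ ω : Fin n → Fin k, x ∈ wordComp f ω '' K := by
  induction n generalizing x with
  | zero => exact ⟨Fin.elim0, x, hx, by rw [wordComp_zero, id_eq]⟩
  | succ n ih =>
    rw [hK] at hx
    obtain ⟨i, y, hy, rfl⟩ := mem_iUnion.1 hx
    obtain ⟨ω, z, hz, rfl⟩ := ih hy
    exact ⟨Fin.cons i ω, z, hz, by rw [wordComp_succ, Fin.cons_zero, Fin.tail_cons, comp_apply]⟩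

theorem nonempty_image_wordComp_inter (hK : ∀ i, MapsTo (f i) K K) (hne : K.Nonempty) {n : ℕ}
    (ω : Fin n → Fin k) : (wordComp f ω '' K ∩ K).Nonempty := by
  rw [inter_eq_left.2 (mapsTo_wordComp hK ω).image_subset]
  exact hne.image _

end Words

section Levels

variable {X : Type*} [MetricSpace X] {k : ℕ} {f : Fin k → X → X} {K : Set X}

theorem levelCount_eq_pow (hK : ∀ i, MapsTo (f i) K K) (hne : K.Nonempty) (n : ℕ) :
    levelCount f K n = k ^ n := by
  simp only [levelCount, nonempty_image_wordComp_inter hK hne, ofPred_true, ncard_univ,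
    Nat.card_fun, Nat.card_fin]

theorem deltaLevel_eq_pow_mul_diam {c : ℝ} (hk : 0 < k) (hc : 0 ≤ c)
    (hf : ∀ i, IsSimilarity (f i) c) (hK : ∀ i, MapsTo (f i) K K) (hne : K.Nonempty) (n : ℕ) :
    deltaLevel f K n = c ^ n * diam K := by
  have : Nonempty (Fin n → Fin k) := ⟨fun _ => ⟨0, hk⟩⟩
  have hdiam : ∀ ω : Fin n → Fin k, diam (wordComp f ω '' K) = c ^ n * diam K := fun ω =>
    (isSimilarity_wordComp hf ω).diam_image (pow_nonneg hc n) K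
  simp only [deltaLevel, nonempty_image_wordComp_inter hK hne, hdiam, true_and, exists_const,
    ofPred_eq_eq_singleton, csSup_singleton]

end Levels

section Counting

variable {X : Type*} [MetricSpace X] {δ : ℝ}

theorem card_le_card_of_pairwise_lt_dist {ι κ : Type*} [Fintype κ] {s : Finset ι} {p : ι → X}
    {A : κ → Set X} (hcov : ∀ i ∈ s, ∃ j, p i ∈ A j)
    (hA : ∀ j, ∀ x ∈ A j, ∀ y ∈ A j, dist x y ≤ δ)
    (hs : (s : Set ι).Pairwise fun i j => δ < dist (p i) (p j)) : s.card ≤ Fintype.card κ := by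
  obtain rfl | ⟨i₀, hi₀⟩ := s.eq_empty_or_nonempty
  · exact Nat.zero_le _
  have : Nonempty κ := ⟨(hcov i₀ hi₀).choose⟩
  choose! q hq using hcov
  refine Finset.card_le_card_of_injOn q (fun i _ => Finset.mem_univ (q i)) fun i hi j hj hij => ?_
  by_contra hne
  exact (hA (q i) _ (hq i hi) _ (hij ▸ hq j hj)).not_gt (hs hi hj hne)

theorem exists_forall_card_le_of_totallyBounded {s : Set X} (hs : TotallyBounded s) (hδ : 0 < δ) :
    ∃ M : ℕ, ∀ {ι : Type*} (t : Finset ι) (p : ι → X), (∀ i ∈ t, p i ∈ s) →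
      ((t : Set ι).Pairwise fun i j => δ < dist (p i) (p j)) → t.card ≤ M := by
  obtain ⟨C, hC, hsC⟩ := totallyBounded_iff.1 hs (δ / 2) (half_pos hδ)
  have := hC.fintype
  refine ⟨Fintype.card C, fun t p hp ht => ?_⟩
  refine card_le_card_of_pairwise_lt_dist (A := fun z : C => ball (z : X) (δ / 2))
    (fun i hi => ?_) (fun z x hx y hy => ?_) ht
  · simpa only [mem_iUnion, exists_prop, Subtype.exists] using hsC (hp i hi)
  · linarith [dist_triangle_right x y z, mem_ball.1 hx, mem_ball.1 hy]

end Counting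

section Packing

variable {X : Type*} [MetricSpace X] {K : Set X} {δ : ℝ} {t : Finset X}

/-- A packing of `K` at scale `δ`: a finite set of points of `K` whose closed `δ`-balls are
disjoint. The packing number `packingNum K δ` is the largest cardinality of such a set. -/
def IsBallPacking (K : Set X) (δ : ℝ) (t : Finset X) : Prop :=
  ↑t ⊆ K ∧ (t : Set X).Pairwise fun x y => Disjoint (closedBall x δ) (closedBall y δ)

theorem IsBallPacking.pairwise_lt_dist (ht : IsBallPacking K δ t) (hδ : 0 ≤ δ) :
    (t : Set X).Pairwise fun x y => δ < dist x y := fun x hx y hy hne => by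
  by_contra! hle
  exact disjoint_left.1 (ht.2 hx hy hne) (mem_closedBall_self hδ) (mem_closedBall.2 hle)

theorem packingNum_le_card_of_cover {κ : Type*} [Fintype κ] {A : κ → Set X} (hδ : 0 ≤ δ)
    (hcov : ∀ x ∈ K, ∃ j, x ∈ A j) (hA : ∀ j, ∀ x ∈ A j, ∀ y ∈ A j, dist x y ≤ δ) :
    packingNum K δ ≤ Fintype.card κ := by
  refine csSup_le' ?_
  rintro _ ⟨t, rfl, ht : IsBallPacking K δ t⟩
  exact card_le_card_of_pairwise_lt_dist (p := id) (fun x hx => hcov x (ht.1 hx)) hA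
    (ht.pairwise_lt_dist hδ)

theorem bddAbove_card_isBallPacking (hK : TotallyBounded K) (hδ : 0 < δ) :
    BddAbove {m : ℕ | ∃ t : Finset X, t.card = m ∧ IsBallPacking K δ t} := by
  obtain ⟨M, hM⟩ := exists_forall_card_le_of_totallyBounded hK hδ
  refine ⟨M, ?_⟩
  rintro _ ⟨t, rfl, ht⟩
  exact hM t id ht.1 (ht.pairwise_lt_dist hδ.le)

theorem exists_isBallPacking_card_eq_packingNum (hK : TotallyBounded K) (hδ : 0 < δ) :
    ∃ t, t.card = packingNum K δ ∧ IsBallPacking K δ t :=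
  have hempty : IsBallPacking K δ ∅ := by simp [IsBallPacking]
  Nat.sSup_mem (s := {m | ∃ t : Finset X, t.card = m ∧ IsBallPacking K δ t}) ⟨0, ∅, rfl, hempty⟩
    (bddAbove_card_isBallPacking hK hδ)

theorem IsBallPacking.card_le_packingNum (ht : IsBallPacking K δ t) (hK : TotallyBounded K)
    (hδ : 0 < δ) : t.card ≤ packingNum K δ :=
  le_csSup (bddAbove_card_isBallPacking hK hδ) ⟨t, rfl, ht⟩

theorem IsBallPacking.exists_dist_le_of_card_eq (ht : IsBallPacking K δ t)
    (hcard : t.card = packingNum K δ) (hK : TotallyBounded K) (hδ : 0 < δ) {x : X} (hx : x ∈ K) :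
    ∃ y ∈ t, dist x y ≤ 2 * δ := by
  classical
  by_contra! hfar
  have hxt : x ∉ t := fun hxt => by linarith [hfar x hxt, dist_self x]
  have hins : IsBallPacking K δ (insert x t) := by
    rw [IsBallPacking, Finset.coe_insert]
    refine ⟨insert_subset hx ht.1, ht.2.insert fun y hy _ => ?_⟩
    have hxy : Disjoint (closedBall x δ) (closedBall y δ) :=
      closedBall_disjoint_closedBall (by linarith [hfar y hy])
    exact ⟨hxy, hxy.symm⟩
  have hle := hins.card_le_packingNum hK hδ
  rw [Finset.card_insert_of_notMem hxt, hcard] at hle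
  exact (Nat.lt_succ_self _).not_ge hle

end Packing

section OpenSetCondition

variable {X : Type*} [MetricSpace X] {k : ℕ} {f : Fin k → X → X} {c : ℝ} {K V : Set X}

/-- `V` is a feasible open set for the family `f`: a nonempty open set witnessing the open set
condition. Unlike in `OSC`, it may be unbounded. -/
structure IsFeasibleOpenSet (f : Fin k → X → X) (V : Set X) : Prop where
  nonempty : V.Nonempty
  isOpen : IsOpen V
  mapsTo : ∀ i, MapsTo (f i) V V
  pairwise_disjoint : Pairwise fun i j => Disjoint (f i '' V) (f j '' V)

theorem OSC.exists_isFeasibleOpenSet {d : ℕ}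
    {f : Fin k → EuclideanSpace ℝ (Fin d) → EuclideanSpace ℝ (Fin d)} (hf : OSC f) :
    ∃ V, IsFeasibleOpenSet f V := by
  obtain ⟨V, hne, hopen, -, hmaps, hdisj⟩ := hf
  exact ⟨V, hne, hopen, fun i => mapsTo_iff_image_subset.2 (hmaps i), hdisj⟩

theorem IsFeasibleOpenSet.pow_mul_le_dist_wordComp (hV : IsFeasibleOpenSet f V) (hc : 0 < c)
    (hf : ∀ i, IsSimilarity (f i) c) (hsurj : ∀ i, Surjective (f i)) {a : X} {r : ℝ} (ha : a ∈ V)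
    (hr : ball a r ⊆ V) {n : ℕ} {ω ω' : Fin n → Fin k} (hne : ω ≠ ω') :
    c ^ n * r ≤ dist (wordComp f ω a) (wordComp f ω' a) := by
  by_contra! hlt
  have hmem : wordComp f ω' a ∈ wordComp f ω '' V :=
    image_mono hr <| (isSimilarity_wordComp hf ω).ball_subset_image_ball (pow_pos hc n)
      (surjective_wordComp hsurj ω) a r (mem_ball'.2 hlt)
  have hdisj := pairwise_disjoint_image_wordComp (fun i => (hf i).injective hc.ne') hV.mapsTo
    hV.pairwise_disjoint n hne
  exact disjoint_left.1 hdisj hmem (mem_image_of_mem _ ha)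

variable [ProperSpace X]

-- Words are pulled back along a word `τ` with `y ∈ f_τ(K)`, which undoes the scaling by `c ^ n`.
theorem IsFeasibleOpenSet.exists_forall_card_dist_le (hV : IsFeasibleOpenSet f V) (hc : 0 < c)
    (hf : ∀ i, IsSimilarity (f i) c) (hsurj : ∀ i, Surjective (f i)) (hK : K = ⋃ i, f i '' K)
    (hKb : IsBounded K) {a : X} (ha : a ∈ V) (R : ℝ) :
    ∃ M : ℕ, ∀ n : ℕ, ∀ y ∈ K, ∀ S : Finset (Fin n → Fin k),
      (∀ ω ∈ S, dist (wordComp f ω a) y ≤ c ^ n * R) → S.card ≤ M := by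
  obtain ⟨r, hr, hball⟩ := isOpen_iff.1 hV.isOpen a ha
  obtain ⟨M, hM⟩ := exists_forall_card_le_of_totallyBounded
    (isCompact_of_isClosed_isBounded (isClosed_cthickening (δ := R)) hKb.cthickening).totallyBounded
    (half_pos hr)
  refine ⟨M, fun n y hy S hS => ?_⟩
  obtain ⟨τ, y, hyK, rfl⟩ := exists_mem_image_wordComp hK n hy
  have hcn : 0 < c ^ n := pow_pos hc n
  have hτ := isSimilarity_wordComp hf τ
  choose p hp using fun ω : Fin n → Fin k => surjective_wordComp hsurj τ (wordComp f ω a)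
  refine hM S p (fun ω hω => ?_) fun ω _ ω' _ hne => ?_
  · have hdist := hS ω hω
    rw [← hp ω, hτ, mul_le_mul_iff_right₀ hcn] at hdist
    exact mem_cthickening_of_dist_le _ y R K hyK hdist
  · have hsep := hV.pow_mul_le_dist_wordComp hc hf hsurj ha hball hne
    rw [← hp ω, ← hp ω', hτ, mul_le_mul_iff_right₀ hcn] at hsep
    exact (half_lt_self hr).trans_le hsep

theorem IsFeasibleOpenSet.exists_forall_pow_le_mul_packingNum (hV : IsFeasibleOpenSet f V)
    (hc : 0 < c) (hf : ∀ i, IsSimilarity (f i) c) (hsurj : ∀ i, Surjective (f i))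
    (hK : K = ⋃ i, f i '' K) (hKb : IsBounded K) (hne : K.Nonempty) :
    ∃ M : ℕ, ∀ (n : ℕ) (δ : ℝ), 0 < δ → δ ≤ c ^ n → k ^ n ≤ M * packingNum K δ := by
  classical
  obtain ⟨a, ha⟩ := hV.nonempty
  obtain ⟨x, hx⟩ := hne
  obtain ⟨M, hM⟩ := hV.exists_forall_card_dist_le hc hf hsurj hK hKb ha (dist a x + 2)
  refine ⟨M, fun n δ hδ hδn => ?_⟩
  have hKt : TotallyBounded K := hKb.isCompact_closure.totallyBounded.subset subset_closure
  obtain ⟨t, hcard, ht⟩ := exists_isBallPacking_card_eq_packingNum hKt hδ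
  have hnear : ∀ ω : Fin n → Fin k, ∃ y ∈ t, dist (wordComp f ω x) y ≤ 2 * δ := fun ω =>
    ht.exists_dist_le_of_card_eq hcard hKt hδ
      (mapsTo_wordComp (mapsTo_of_eq_iUnion_image hK) ω hx)
  choose q hqt hq using hnear
  have hfiber : ∀ y ∈ t, (Finset.univ.filter fun ω => q ω = y).card ≤ M := fun y hy => by
    refine hM n y (ht.1 hy) _ fun ω hω => ?_
    obtain rfl : q ω = y := (Finset.mem_filter.1 hω).2
    calc dist (wordComp f ω a) (q ω)
        ≤ dist (wordComp f ω a) (wordComp f ω x) + dist (wordComp f ω x) (q ω) :=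
          dist_triangle _ _ _
      _ ≤ c ^ n * dist a x + 2 * c ^ n := by
          rw [isSimilarity_wordComp hf]
          linarith [hq ω]
      _ = c ^ n * (dist a x + 2) := by ring
  simpa only [Finset.card_univ, Fintype.card_fun, Fintype.card_fin, hcard] using
    Finset.card_le_mul_card_image_of_maps_to (s := Finset.univ) (fun ω _ => hqt ω) M hfiber

end OpenSetCondition

theorem packingNum_le_pow {X : Type*} [MetricSpace X] {k : ℕ} {f : Fin k → X → X} {c : ℝ}
    {K : Set X} (hc : 0 ≤ c) (hf : ∀ i, IsSimilarity (f i) c) (hK : K = ⋃ i, f i '' K)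
    (hKb : IsBounded K) {n : ℕ} {δ : ℝ} (hδ : c ^ n * diam K ≤ δ) : packingNum K δ ≤ k ^ n := by
  have hcn : 0 ≤ c ^ n := pow_nonneg hc n
  have hpiece : ∀ ω : Fin n → Fin k, ∀ x ∈ wordComp f ω '' K, ∀ y ∈ wordComp f ω '' K,
      dist x y ≤ δ := by
    rintro ω _ ⟨x, hx, rfl⟩ _ ⟨y, hy, rfl⟩
    rw [isSimilarity_wordComp hf]
    exact (mul_le_mul_of_nonneg_left (dist_le_diam_of_mem hKb hx hy) hcn).trans hδ
  simpa only [Fintype.card_fun, Fintype.card_fin] using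
    packingNum_le_card_of_cover ((mul_nonneg hcn diam_nonneg).trans hδ)
      (fun x hx => exists_mem_image_wordComp hK n hx) hpiece

section Asymptotics

variable {a c : ℝ}

theorem tendsto_log_div_log_of_isTheta_rpow {α : Type*} {l : Filter α} {u g : α → ℝ} {s : ℝ}
    (hg : Tendsto g l (𝓝[>] 0)) (hu : u =Θ[l] fun x => g x ^ s) :
    Tendsto (fun x => log (u x) / log (g x)) l (𝓝 s) := by
  have hlog : Tendsto (fun x => log (g x)) l atBot := tendsto_log_nhdsGT_zero.comp hg
  obtain ⟨C, hC, hupper⟩ := hu.1.exists_pos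
  obtain ⟨B, hB, hlower⟩ := hu.2.exists_pos
  have hbdd : (fun x => log (u x) - s * log (g x)) =O[l] fun _ => (1 : ℝ) := by
    refine IsBigO.of_bound (|log C| + |log B|) ?_
    filter_upwards [hupper.bound, hlower.bound, hg.eventually self_mem_nhdsWithin]
      with x hle hge (hx : 0 < g x)
    have hpow : 0 < g x ^ s := rpow_pos_of_pos hx s
    rw [norm_of_nonneg hpow.le, norm_eq_abs] at hle hge
    have hux : 0 < |u x| := pos_of_mul_pos_right (hpow.trans_le hge) hB.le
    have hle_log := log_le_log hux hle
    have hge_log := log_le_log hpow hge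
    rw [log_mul hC.ne' hpow.ne', log_rpow hx, log_abs] at hle_log
    rw [log_mul hB.ne' hux.ne', log_rpow hx, log_abs] at hge_log
    rw [norm_one, mul_one, norm_eq_abs, abs_le]
    constructor <;> linarith [le_abs_self (log C), le_abs_self (log B), abs_nonneg (log C),
      abs_nonneg (log B)]
  have hsmall : (fun x => log (u x) - s * log (g x)) =o[l] fun x => log (g x) :=
    hbdd.trans_isLittleO (isLittleO_one_left_iff ℝ |>.2 (tendsto_abs_atBot_atTop.comp hlog))
  have hlim : Tendsto (fun x => s + (log (u x) - s * log (g x)) / log (g x)) l (𝓝 s) := by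
    simpa only [add_zero] using hsmall.tendsto_div_nhds_zero.const_add s
  refine hlim.congr' ?_
  filter_upwards [hlog.eventually_lt_atBot 0] with x hx
  field_simp [hx.ne]
  ring

theorem pow_rpow_logb (hc : c ∈ Ioo (0 : ℝ) 1) (ha : 0 < a) (n : ℕ) :
    (c ^ n) ^ logb c a = a ^ n := by
  rw [← rpow_pow_comm hc.1.le, rpow_logb hc.1 hc.2.ne ha]

theorem logb_nonpos_of_base_mem_Ioo (hc : c ∈ Ioo (0 : ℝ) 1) (ha : 1 ≤ a) : logb c a ≤ 0 :=
  div_nonpos_of_nonneg_of_nonpos (log_nonneg ha) (log_nonpos hc.1.le hc.2.le)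

theorem isTheta_pow_rpow_logb (hc : c ∈ Ioo (0 : ℝ) 1) (ha : 0 < a) {D : ℝ} (hD : 0 < D) :
    (fun n : ℕ => a ^ n) =Θ[atTop] fun n => (c ^ n * D) ^ logb c a := by
  have hDs : D ^ logb c a ≠ 0 := (rpow_pos_of_pos hD _).ne'
  have hpow : (fun n : ℕ => (c ^ n * D) ^ logb c a) = fun n => D ^ logb c a * a ^ n :=
    funext fun n => by rw [mul_rpow (pow_nonneg hc.1.le n) hD.le, pow_rpow_logb hc ha, mul_comm]
  rw [hpow]
  exact ((isTheta_refl _ _).const_mul_left hDs).symm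

theorem isBigO_rpow_logb_of_le_pow {N : ℝ → ℝ} {D : ℝ} (hc : c ∈ Ioo (0 : ℝ) 1) (ha : 1 ≤ a)
    (hD : 0 < D) (hN : ∀ (n : ℕ) (δ : ℝ), c ^ n * D ≤ δ → ‖N δ‖ ≤ a ^ n) :
    N =O[𝓝[>] 0] fun δ => δ ^ logb c a := by
  have ha0 : 0 < a := zero_lt_one.trans_le ha
  refine IsBigO.of_bound (a * D⁻¹ ^ logb c a) ?_
  filter_upwards [Ioc_mem_nhdsGT hD] with δ ⟨hδ, hδD⟩
  obtain ⟨n, hlt, hle⟩ :=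
    exists_nat_pow_near_of_lt_one (div_pos hδ hD) ((div_le_one hD).2 hδD) hc.1 hc.2
  calc ‖N δ‖ ≤ a ^ (n + 1) := hN (n + 1) δ ((lt_div_iff₀ hD).1 hlt).le
    _ = a * (c ^ n) ^ logb c a := by rw [pow_rpow_logb hc ha0, pow_succ']
    _ ≤ a * (δ / D) ^ logb c a := mul_le_mul_of_nonneg_left
        (rpow_le_rpow_of_nonpos (div_pos hδ hD) hle (logb_nonpos_of_base_mem_Ioo hc ha)) ha0.le
    _ = a * D⁻¹ ^ logb c a * ‖δ ^ logb c a‖ := by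
        rw [norm_of_nonneg (rpow_nonneg hδ.le _), div_eq_inv_mul,
          mul_rpow (inv_nonneg.2 hD.le) hδ.le, mul_assoc]

theorem rpow_logb_isBigO_of_pow_le {N : ℝ → ℝ} {M : ℝ} (hc : c ∈ Ioo (0 : ℝ) 1) (ha : 1 ≤ a)
    (hN : ∀ (n : ℕ) (δ : ℝ), 0 < δ → δ ≤ c ^ n → a ^ n ≤ M * ‖N δ‖) :
    (fun δ => δ ^ logb c a) =O[𝓝[>] 0] N := by
  have ha0 : 0 < a := zero_lt_one.trans_le ha
  refine IsBigO.of_bound (a * M) ?_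
  filter_upwards [Ioc_mem_nhdsGT one_pos] with δ ⟨hδ, hδ1⟩
  obtain ⟨n, hlt, hle⟩ := exists_nat_pow_near_of_lt_one hδ hδ1 hc.1 hc.2
  calc ‖δ ^ logb c a‖ = δ ^ logb c a := norm_of_nonneg (rpow_nonneg hδ.le _)
    _ ≤ (c ^ (n + 1)) ^ logb c a :=
        rpow_le_rpow_of_nonpos (pow_pos hc.1 _) hlt.le (logb_nonpos_of_base_mem_Ioo hc ha)
    _ = a * a ^ n := by rw [pow_rpow_logb hc ha0, pow_succ']
    _ ≤ a * (M * ‖N δ‖) := mul_le_mul_of_nonneg_left (hN n δ hδ hle) ha0.le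
    _ = a * M * ‖N δ‖ := (mul_assoc _ _ _).symm

end Asymptotics

section SelfSimilar

variable {X : Type*} [MetricSpace X] {k : ℕ} {f : Fin k → X → X} {c : ℝ} {K V : Set X}

theorem packingNum_isTheta_rpow_logb [ProperSpace X] (hc : c ∈ Ioo (0 : ℝ) 1)
    (hf : ∀ i, IsSimilarity (f i) c) (hsurj : ∀ i, Surjective (f i)) (hV : IsFeasibleOpenSet f V)
    (hKb : IsBounded K) (hK : K = ⋃ i, f i '' K) (hdiam : 0 < diam K) :
    (fun δ => (packingNum K δ : ℝ)) =Θ[𝓝[>] 0] fun δ => δ ^ logb c k := by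
  have hne : K.Nonempty := nonempty_iff_ne_empty.2 fun hK₀ => by simp [hK₀] at hdiam
  have hk : (1 : ℝ) ≤ k := Nat.one_le_cast.2 (pos_of_eq_iUnion_image hK hne)
  obtain ⟨M, hM⟩ := hV.exists_forall_pow_le_mul_packingNum hc.1 hf hsurj hK hKb hne
  refine ⟨isBigO_rpow_logb_of_le_pow hc hk hdiam fun n δ hδ => ?_,
    rpow_logb_isBigO_of_pow_le (M := M) hc hk fun n δ hδ hδn => ?_⟩
  · rw [Real.norm_natCast]
    exact_mod_cast packingNum_le_pow hc.1.le hf hK hKb hδ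
  · rw [Real.norm_natCast]
    exact_mod_cast hM n δ hδ hδn

theorem tendsto_log_levelCount_div_neg_log_deltaLevel (hc : c ∈ Ioo (0 : ℝ) 1)
    (hf : ∀ i, IsSimilarity (f i) c) (hK : K = ⋃ i, f i '' K) (hdiam : 0 < diam K) :
    Tendsto (fun n : ℕ => Real.log (levelCount f K n) / (-Real.log (deltaLevel f K n))) atTop
      (𝓝 (-Real.log k / Real.log c)) := by
  have hne : K.Nonempty := nonempty_iff_ne_empty.2 fun hK₀ => by simp [hK₀] at hdiam
  have hk : 0 < k := pos_of_eq_iUnion_image hK hne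
  have hKK := mapsTo_of_eq_iUnion_image hK
  have hscale : Tendsto (fun n : ℕ => c ^ n * diam K) atTop (𝓝[>] 0) := by
    refine tendsto_nhdsWithin_iff.2 ⟨?_, .of_forall fun n => mul_pos (pow_pos hc.1 n) hdiam⟩
    simpa only [zero_mul] using
      (tendsto_pow_atTop_nhds_zero_of_lt_one hc.1.le hc.2).mul_const (diam K)
  have hlim := tendsto_log_div_log_of_isTheta_rpow hscale
    (isTheta_pow_rpow_logb hc (Nat.cast_pos.2 hk) hdiam)
  simpa only [levelCount_eq_pow hKK hne, deltaLevel_eq_pow_mul_diam hk hc.1.le hf hKK hne,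
    Nat.cast_pow, div_neg, neg_div, logb] using hlim.neg

theorem dim2_eq_box_dim_general [ProperSpace X] (hc : c ∈ Ioo (0 : ℝ) 1)
    (hf : ∀ i, IsSimilarity (f i) c) (hsurj : ∀ i, Surjective (f i)) (hV : IsFeasibleOpenSet f V)
    (hKb : IsBounded K) (hK : K = ⋃ i, f i '' K) (hdiam : 0 < diam K) :
    Tendsto (fun n : ℕ => Real.log (levelCount f K n) / (-Real.log (deltaLevel f K n))) atTop
        (𝓝 (-Real.log k / Real.log c)) ∧
      Tendsto (fun δ : ℝ => Real.log (packingNum K δ) / (-Real.log δ)) (𝓝[>] 0)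
        (𝓝 (-Real.log k / Real.log c)) := by
  refine ⟨tendsto_log_levelCount_div_neg_log_deltaLevel hc hf hK hdiam, ?_⟩
  have hlim := tendsto_log_div_log_of_isTheta_rpow tendsto_id
    (packingNum_isTheta_rpow_logb hc hf hsurj hV hKb hK hdiam)
  simpa only [id_eq, div_neg, neg_div, logb] using hlim.neg

end SelfSimilar

/-- under the OSC and a common factor `c`, the fractal dimension II of the
attractor exists, equals its box dimension, and both equal `-log k / log c`. -/
theorem dim2_eq_box_dim {d k : ℕ} (hk : 0 < k)
    (f : Fin k → EuclideanSpace ℝ (Fin d) → EuclideanSpace ℝ (Fin d))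
    (c : ℝ) (hc : c ∈ Set.Ioo (0 : ℝ) 1)
    (hf : ∀ i, IsSimilarity (f i) c) (hosc : OSC f)
    (K : Set (EuclideanSpace ℝ (Fin d))) (hne : K.Nonempty) (hcpt : IsCompact K)
    (hK : K = ⋃ i, f i '' K) (hdiam : 0 < Metric.diam K) :
    Filter.Tendsto (fun n : ℕ => Real.log (levelCount f K n) / (-Real.log (deltaLevel f K n)))
        Filter.atTop (𝓝 (-Real.log k / Real.log c)) ∧
      Filter.Tendsto (fun δ : ℝ => Real.log (packingNum K δ) / (-Real.log δ))
        (𝓝[>] (0 : ℝ)) (𝓝 (-Real.log k / Real.log c)) := by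
  obtain ⟨V, hV⟩ := hosc.exists_isFeasibleOpenSet
  exact dim2_eq_box_dim_general hc hf (fun i => (hf i).surjective hc.1) hV hcpt.isBounded hK hdiam
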